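/- Let C be the n×n matrix of all ones with weight function g_T(x) = e^{x/T}, and define T*(n) = sup_{α>1} (1 − 1/α)/ln((α−1)·n + 1). If n > 2, then the map u_T has a unique fixed point, namely the uniform vector (1/n, …, 1/n), if and only if T > T*(n). If n = 2, then u_T has a unique fixed point, namely (1/2, 1/2), if and only if T ≥ T*(2) = 1/2. -/

import Mathlib

open Set

/-- For the complete graph (the matrix of all ones) with weight `g_T(x) = e^{x/T}`,
the unique invariant measure of `M_T(x)` is `u_T(x)_i = e^{x_i/T} / Σ_k e^{x_k/T}`. -/
noncomputable def uT (n : ℕ) (T : ℝ) (x : Fin n → ℝ) : Fin n → ℝ :=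
  fun i => Real.exp (x i / T) / ∑ k, Real.exp (x k / T)

/-- The critical temperature of the complete graph on `n` nodes:
`T*(n) = sup_{α>1} (1 − 1/α)/ln((α−1)·n + 1)`. -/
noncomputable def Tstar (n : ℕ) : ℝ :=
  sSup {t : ℝ | ∃ α : ℝ, 1 < α ∧ t = (1 - 1/α) / Real.log ((α - 1) * n + 1)}

/-!
For `α > 1`, let a `spike` be the point of the simplex with all coordinates equal to `1 / (nα)`
except one, which then exceeds the others by the factor `(α - 1)n + 1`. Its fixed point equation
determines the temperature: `T = (1 - 1/α) / log ((α - 1)n + 1)`, the quantity in the supremum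
defining `T*(n)`. Conversely, subadditivity of `t ↦ log (1 + t)` shows that a nonuniform fixed point
with smallest coordinate `1 / (nα)` can only exist at temperatures up to that of the spike with the
same `α`. As the spike temperature is continuous in `α` and tends to `0` as `α → ∞`, every positive
temperature below an attained one is attained, so the uniform vector is the unique fixed point iff
`T` exceeds all spike temperatures. These tend to `1/n` as `α → 1`; for `n ≤ 2` they stay below this
limit, whereas for `n > 2` they exceed it near `α = 1` and therefore attain their supremum.
-/

open Filter Topology

/-- The convex combination of the uniform vector, with weight `1 / α`, and the vertex `i₀` of the
simplex. If `uT` has a nonuniform fixed point at a temperature `T > 0`, then some spike with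
`1 < α` is fixed at that `T` as well. -/
noncomputable def spike {n : ℕ} (α : ℝ) (i₀ : Fin n) : Fin n → ℝ :=
  (1 / α) • (fun _ => (1 : ℝ) / n) + (1 - 1 / α) • Pi.single i₀ 1

/-- The temperature at which `spike α i₀` is a fixed point of `uT`, for `1 < α` and a number of
nodes `c`, which is allowed to be real. -/
noncomputable def spikeTemp (c α : ℝ) : ℝ :=
  (1 - 1 / α) / Real.log ((α - 1) * c + 1)

lemma log_one_add_sum_le_sum_log_one_add {ι : Type*} (s : Finset ι) {y : ι → ℝ}
    (hy : ∀ i ∈ s, 0 ≤ y i) :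
    Real.log (1 + ∑ i ∈ s, y i) ≤ ∑ i ∈ s, Real.log (1 + y i) := by
  refine Finset.le_sum_of_subadditive_on_pred (fun t : ℝ => Real.log (1 + t)) (0 ≤ ·)
    (by simp) (fun a b ha hb => ?_) (fun a b => add_nonneg) y hy
  rw [← Real.log_mul (by positivity) (by positivity)]
  exact Real.log_le_log (by positivity) (by linarith [mul_nonneg ha hb])

lemma log_one_add_lt_of_pos {t : ℝ} (ht : 0 < t) :
    Real.log (1 + t) < t * (t + 2) / (2 * (t + 1)) := by
  calc Real.log (1 + t) < Real.sinh (Real.log (1 + t)) :=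
        Real.self_lt_sinh_iff.2 (Real.log_pos (by linarith))
    _ = t * (t + 2) / (2 * (t + 1)) := by
        rw [Real.sinh_log (by positivity)]
        field_simp
        ring

lemma exists_lt_one_div_card_of_mem_stdSimplex {𝕜 ι : Type*} [Field 𝕜] [LinearOrder 𝕜]
    [IsStrictOrderedRing 𝕜] [Fintype ι] {x : ι → 𝕜} (hx : x ∈ stdSimplex 𝕜 ι)
    (hne : x ≠ fun _ => 1 / (Fintype.card ι : 𝕜)) :
    ∃ i, x i < 1 / (Fintype.card ι : 𝕜) := by
  by_contra! hle
  obtain ⟨i, -⟩ := Function.ne_iff.1 hne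
  have : Nonempty ι := ⟨i⟩
  have hsum : ∑ _ : ι, 1 / (Fintype.card ι : 𝕜) = ∑ i, x i := by
    rw [hx.2]
    simp
  have heq := (Finset.sum_eq_sum_iff_of_le fun i _ => hle i).1 hsum
  exact hne (funext fun i => (heq i (Finset.mem_univ i)).symm)

lemma exists_isMaxOn_Ioi {X Y : Type*} [ConditionallyCompleteLinearOrder X]
    [TopologicalSpace X] [OrderTopology X] [LinearOrder Y] [TopologicalSpace Y]
    [ClosedIciTopology Y] {f : X → Y} {a b : X} (hf : ContinuousOn f (Ioi a)) (hb : a < b)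
    (hnear : ∀ᶠ x in 𝓝[>] a, f x ≤ f b) (hfar : ∀ᶠ x in atTop, f x ≤ f b) :
    ∃ m ∈ Ioi a, IsMaxOn f (Ioi a) m := by
  have : Nonempty X := ⟨a⟩
  obtain ⟨u, hau, hu⟩ := (nhdsGT_basis_of_exists_gt ⟨b, hb⟩).eventually_iff.1 hnear
  obtain ⟨v, hv⟩ := eventually_atTop.1 hfar
  have hsub : Icc (min u b) (max v b) ⊆ Ioi a := fun x hx => (lt_min hau hb).trans_le hx.1
  have hbmem : b ∈ Icc (min u b) (max v b) := ⟨min_le_right u b, le_max_right v b⟩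
  obtain ⟨m, hm, hmax⟩ := isCompact_Icc.exists_isMaxOn ⟨b, hbmem⟩ (hf.mono hsub)
  refine ⟨m, hsub hm, fun x hx => ?_⟩
  by_cases hxu : x < u
  · exact (hu ⟨hx, hxu⟩).trans (hmax hbmem)
  by_cases hvx : v ≤ x
  · exact (hv x hvx).trans (hmax hbmem)
  · exact hmax ⟨(min_le_left u b).trans (not_lt.1 hxu), (not_le.1 hvx).le.trans (le_max_left v b)⟩

section SpikeTemp

variable {c α : ℝ}

lemma log_sub_one_mul_add_one_pos (hc : 0 < c) (hα : 1 < α) : 0 < Real.log ((α - 1) * c + 1) :=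
  Real.log_pos (by linarith [mul_pos (sub_pos.2 hα) hc])

lemma spikeTemp_pos (hc : 0 < c) (hα : 1 < α) : 0 < spikeTemp c α :=
  div_pos (sub_pos.2 ((div_lt_one (by positivity)).2 hα)) (log_sub_one_mul_add_one_pos hc hα)

lemma spikeTemp_lt (hc : 0 < c) (hα : 1 < α) :
    spikeTemp c α < ((α - 1) * c + 2) / (2 * α * c) := by
  have hα' : 0 < α - 1 := sub_pos.2 hα
  have hlog := Real.lt_log_one_add_of_pos (mul_pos hα' hc)
  rw [add_comm 1] at hlog
  rw [spikeTemp, div_lt_iff₀ (log_sub_one_mul_add_one_pos hc hα)]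
  calc 1 - 1 / α
      = ((α - 1) * c + 2) / (2 * α * c) * (2 * ((α - 1) * c) / ((α - 1) * c + 2)) := by
        field_simp
    _ < ((α - 1) * c + 2) / (2 * α * c) * Real.log ((α - 1) * c + 1) := by gcongr

lemma lt_spikeTemp (hc : 0 < c) (hα : 1 < α) :
    2 * ((α - 1) * c + 1) / (α * c * ((α - 1) * c + 2)) < spikeTemp c α := by
  have hα' : 0 < α - 1 := sub_pos.2 hα
  have hlog := log_one_add_lt_of_pos (mul_pos hα' hc)
  rw [add_comm 1] at hlog
  rw [spikeTemp, lt_div_iff₀ (log_sub_one_mul_add_one_pos hc hα)]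
  calc 2 * ((α - 1) * c + 1) / (α * c * ((α - 1) * c + 2)) * Real.log ((α - 1) * c + 1)
      < 2 * ((α - 1) * c + 1) / (α * c * ((α - 1) * c + 2)) *
        ((α - 1) * c * ((α - 1) * c + 2) / (2 * ((α - 1) * c + 1))) := by gcongr
    _ = 1 - 1 / α := by field_simp

lemma spikeTemp_lt_one_div (hc : 0 < c) (hc' : c ≤ 2) (hα : 1 < α) : spikeTemp c α < 1 / c := by
  refine (spikeTemp_lt hc hα).trans_le ?_
  rw [div_le_div_iff₀ (by positivity) hc]
  nlinarith [mul_nonneg (mul_nonneg hc.le (sub_pos.2 hα).le) (sub_nonneg.2 hc')]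

lemma exists_one_div_lt_spikeTemp (hc : 2 < c) : ∃ α, 1 < α ∧ 1 / c < spikeTemp c α := by
  have hpos : 0 < (c - 2) / (2 * c) := div_pos (by linarith) (by linarith)
  -- With `t = (α - 1) * c`, the bound of `lt_spikeTemp` exceeds `1 / c` iff `0 < t < c - 2`.
  refine ⟨1 + (c - 2) / (2 * c), by linarith, lt_of_le_of_lt ?_
    (lt_spikeTemp (by linarith) (by linarith))⟩
  have ht : (1 + (c - 2) / (2 * c) - 1) * c = (c - 2) / 2 := by
    field_simp
    ring
  rw [ht, div_le_div_iff₀ (by linarith) (by positivity)]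
  field_simp
  nlinarith

lemma continuousOn_spikeTemp (hc : 0 < c) : ContinuousOn (spikeTemp c) (Ioi 1) := by
  intro α hα
  have hα : 1 < α := hα
  have hlog := log_sub_one_mul_add_one_pos hc hα
  have harg : (α - 1) * c + 1 ≠ 0 := by linarith [mul_pos (sub_pos.2 hα) hc]
  have hne : α ≠ 0 := by linarith
  unfold spikeTemp
  exact ContinuousAt.continuousWithinAt (by fun_prop (disch := first | assumption | positivity))

lemma tendsto_spikeTemp_nhdsGT_one (hc : 0 < c) :
    Tendsto (spikeTemp c) (𝓝[>] 1) (𝓝 (1 / c)) := by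
  have hlower : ContinuousAt
      (fun α : ℝ => 2 * ((α - 1) * c + 1) / (α * c * ((α - 1) * c + 2))) 1 := by
    fun_prop (disch := simp [hc.ne'])
  have hupper : ContinuousAt (fun α : ℝ => ((α - 1) * c + 2) / (2 * α * c)) 1 := by
    fun_prop (disch := simp [hc.ne'])
  have hlower_one : 2 * (((1 : ℝ) - 1) * c + 1) / (1 * c * ((1 - 1) * c + 2)) = 1 / c := by
    simp [div_mul_cancel_right₀]
  have hupper_one : (((1 : ℝ) - 1) * c + 2) / (2 * 1 * c) = 1 / c := by
    simp [div_mul_cancel_left₀]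
  refine tendsto_of_tendsto_of_tendsto_of_le_of_le'
    (hlower_one ▸ hlower.tendsto.mono_left nhdsWithin_le_nhds)
    (hupper_one ▸ hupper.tendsto.mono_left nhdsWithin_le_nhds) ?_ ?_
  · filter_upwards [self_mem_nhdsWithin] with α hα using (lt_spikeTemp hc hα).le
  · filter_upwards [self_mem_nhdsWithin] with α hα using (spikeTemp_lt hc hα).le

lemma tendsto_spikeTemp_atTop (hc : 0 < c) : Tendsto (spikeTemp c) atTop (𝓝 0) := by
  have hnum : Tendsto (fun α : ℝ => 1 - 1 / α) atTop (𝓝 (1 - 0)) :=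
    tendsto_const_nhds.sub (tendsto_const_nhds.div_atTop tendsto_id)
  have harg : Tendsto (fun α : ℝ => (α - 1) * c + 1) atTop atTop :=
    tendsto_atTop_add_const_right _ _
      ((tendsto_atTop_add_const_right _ (-1) tendsto_id).atTop_mul_const hc)
  exact hnum.div_atTop (Real.tendsto_log_atTop.comp harg)

lemma Ioc_subset_image_spikeTemp (hc : 0 < c) (hα : 1 < α) :
    Ioc 0 (spikeTemp c α) ⊆ spikeTemp c '' Ioi 1 :=
  isPreconnected_Ioi.intermediate_value_Ioc hα (le_principal_iff.2 (Ioi_mem_atTop 1))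
    (continuousOn_spikeTemp hc) (tendsto_spikeTemp_atTop hc)

lemma isLUB_image_spikeTemp (hc : 0 < c) (hc' : c ≤ 2) :
    IsLUB (spikeTemp c '' Ioi 1) (1 / c) := by
  refine ⟨?_, fun b hb => le_of_tendsto (tendsto_spikeTemp_nhdsGT_one hc) ?_⟩
  · rintro _ ⟨α, hα, rfl⟩
    exact (spikeTemp_lt_one_div hc hc' hα).le
  · filter_upwards [self_mem_nhdsWithin] with α hα using hb (mem_image_of_mem _ hα)

lemma exists_isGreatest_image_spikeTemp (hc : 2 < c) :
    ∃ t, IsGreatest (spikeTemp c '' Ioi 1) t := by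
  have hc0 : 0 < c := by linarith
  obtain ⟨α, hα, hlt⟩ := exists_one_div_lt_spikeTemp hc
  have hnear := (tendsto_spikeTemp_nhdsGT_one hc0).eventually_le_const hlt
  have hfar := (tendsto_spikeTemp_atTop hc0).eventually_le_const ((one_div_pos.2 hc0).trans hlt)
  obtain ⟨m, hm, hmax⟩ := exists_isMaxOn_Ioi (continuousOn_spikeTemp hc0) hα hnear hfar
  exact ⟨spikeTemp c m, mem_image_of_mem _ hm, forall_mem_image.2 hmax⟩

lemma Tstar_eq_sSup_image (n : ℕ) : Tstar n = sSup (spikeTemp n '' Ioi 1) :=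
  congrArg sSup <| ext fun _ => exists_congr fun _ => and_congr_right fun _ => eq_comm

lemma Tstar_two : Tstar 2 = 1 / 2 := by
  rw [Tstar_eq_sSup_image]
  exact (isLUB_image_spikeTemp two_pos le_rfl).csSup_eq (nonempty_Ioi.image _)

end SpikeTemp

section FixedPoints

variable {n : ℕ} {T : ℝ} {x : Fin n → ℝ}

lemma pos_of_uT_eq_self (hfix : uT n T x = x) (i : Fin n) : 0 < x i := by
  have : Nonempty (Fin n) := ⟨i⟩
  rw [← hfix, uT]
  positivity

lemma uT_eq_self_iff (hT : T ≠ 0) (hpos : ∀ i, 0 < x i) (hsum : ∑ i, x i = 1) (j : Fin n) :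
    uT n T x = x ↔ ∀ i, T * Real.log (x i / x j) = x i - x j := by
  have : Nonempty (Fin n) := ⟨j⟩
  have hZ : ∑ k, Real.exp (x k / T) ≠ 0 := by positivity
  constructor
  · intro hfix i
    have hratio : x i / x j = Real.exp ((x i - x j) / T) := by
      conv_lhs => rw [← hfix]
      rw [uT, uT, div_div_div_cancel_right₀ hZ, sub_div, Real.exp_sub]
    rw [hratio, Real.log_exp, mul_div_cancel₀ _ hT]
  · intro hlog
    have hexp (i : Fin n) : Real.exp (x i / T) = x i * (Real.exp (x j / T) / x j) := by
      have hratio : Real.exp (x i / T - x j / T) = x i / x j := by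
        rw [← sub_div, ← hlog i, mul_div_cancel_left₀ _ hT,
          Real.exp_log (div_pos (hpos i) (hpos j))]
      rw [← sub_add_cancel (x i / T) (x j / T), Real.exp_add, hratio]
      ring
    have hsum_exp : ∑ k, Real.exp (x k / T) = Real.exp (x j / T) / x j := by
      rw [Finset.sum_congr rfl fun k _ => hexp k, ← Finset.sum_mul, hsum, one_mul]
    funext i
    rw [uT, div_eq_iff hZ, hsum_exp, hexp]

lemma uT_uniform (n : ℕ) (T : ℝ) : uT n T (fun _ => (1 : ℝ) / n) = fun _ => (1 : ℝ) / n := by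
  funext i
  simp [uT, div_mul_cancel_right₀ (Real.exp_ne_zero _)]

lemma spike_mem_stdSimplex {α : ℝ} (hα : 1 ≤ α) (i₀ : Fin n) :
    spike α i₀ ∈ stdSimplex ℝ (Fin n) := by
  have : NeZero n := ⟨i₀.pos.ne'⟩
  have huniform : (fun _ => (1 : ℝ) / n) ∈ stdSimplex ℝ (Fin n) :=
    ⟨fun _ => by positivity, by simp⟩
  exact convex_stdSimplex ℝ (Fin n) huniform (single_mem_stdSimplex ℝ i₀) (by positivity)
    (sub_nonneg.2 ((div_le_one (by positivity)).2 hα)) (add_sub_cancel _ _)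

lemma spike_apply_self (α : ℝ) (i₀ : Fin n) :
    spike α i₀ i₀ = 1 / (α * n) + (1 - 1 / α) := by
  simp [spike, mul_comm]

lemma spike_apply_of_ne (α : ℝ) {i i₀ : Fin n} (h : i ≠ i₀) : spike α i₀ i = 1 / (α * n) := by
  simp [spike, h, mul_comm]

lemma spike_pos {α : ℝ} (hα : 1 ≤ α) (i₀ i : Fin n) : 0 < spike α i₀ i := by
  have hn : (0 : ℝ) < n := Nat.cast_pos.2 i.pos
  rcases eq_or_ne i i₀ with rfl | hi
  · rw [spike_apply_self]
    have hgap : 0 ≤ 1 - 1 / α := sub_nonneg.2 ((div_le_one (by positivity)).2 hα)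
    positivity
  · rw [spike_apply_of_ne α hi]
    positivity

lemma spike_div_spike_self {α : ℝ} (hα : α ≠ 0) {i i₀ : Fin n} (h : i ≠ i₀) :
    spike α i₀ i / spike α i₀ i₀ = ((α - 1) * n + 1)⁻¹ := by
  have hn : (n : ℝ) ≠ 0 := Nat.cast_ne_zero.2 i.pos.ne'
  have hself : spike α i₀ i₀ = 1 / (α * n) * ((α - 1) * n + 1) := by
    rw [spike_apply_self]
    field_simp
    ring
  rw [hself, spike_apply_of_ne α h, div_mul_cancel_left₀ (by positivity)]

lemma uT_spike {α : ℝ} (hα : 1 < α) (i₀ : Fin n) :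
    uT n (spikeTemp n α) (spike α i₀) = spike α i₀ := by
  have hn : (0 : ℝ) < n := Nat.cast_pos.2 i₀.pos
  have hlog := log_sub_one_mul_add_one_pos hn hα
  refine (uT_eq_self_iff (spikeTemp_pos hn hα).ne' (spike_pos hα.le i₀)
    (spike_mem_stdSimplex hα.le i₀).2 i₀).2 fun i => ?_
  rcases eq_or_ne i i₀ with rfl | hi
  · rw [div_self (spike_pos hα.le i i).ne', Real.log_one, mul_zero, sub_self]
  · rw [spike_div_spike_self (by positivity) hi, Real.log_inv, mul_neg, spikeTemp,
      div_mul_cancel₀ _ hlog.ne', spike_apply_self, spike_apply_of_ne α hi, sub_add_cancel_left]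

lemma spike_ne_uniform {α : ℝ} (hα : 1 < α) {i i₀ : Fin n} (h : i ≠ i₀) :
    spike α i₀ ≠ fun _ => (1 : ℝ) / n := by
  have hn : (0 : ℝ) < n := Nat.cast_pos.2 i.pos
  refine ne_of_apply_ne (· i) (ne_of_lt ?_)
  rw [spike_apply_of_ne α h]
  exact one_div_lt_one_div_of_lt hn (lt_mul_of_one_lt_left hn hα)

lemma exists_le_spikeTemp_of_uT_eq_self (hT : 0 < T) (hx : x ∈ stdSimplex ℝ (Fin n))
    (hfix : uT n T x = x) (hne : x ≠ fun _ => (1 : ℝ) / n) :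
    ∃ α, 1 < α ∧ T ≤ spikeTemp n α := by
  obtain ⟨i, hi⟩ := exists_lt_one_div_card_of_mem_stdSimplex hx (by rwa [Fintype.card_fin])
  rw [Fintype.card_fin] at hi
  have hn : (0 : ℝ) < n := Nat.cast_pos.2 i.pos
  have : Nonempty (Fin n) := ⟨i⟩
  obtain ⟨j, hj⟩ := Finite.exists_min x
  have hpos := pos_of_uT_eq_self hfix
  have hxj := hpos j
  have hlog := (uT_eq_self_iff hT.ne' hpos hx.2 j).1 hfix
  have hα : 1 < 1 / (n * x j) := by
    rw [one_lt_div (by positivity), mul_comm, ← lt_div_iff₀ hn]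
    exact (hj i).trans_lt hi
  refine ⟨1 / (n * x j), hα, (le_div_iff₀ (log_sub_one_mul_add_one_pos hn hα)).2 ?_⟩
  have hsum : (1 / (n * x j) - 1) * n + 1 = 1 + ∑ i, (x i / x j - 1) := by
    rw [Finset.sum_sub_distrib, ← Finset.sum_div, hx.2]
    simp only [Finset.sum_const, Finset.card_univ, Fintype.card_fin, nsmul_eq_mul, mul_one]
    field_simp
    ring
  calc T * Real.log ((1 / (n * x j) - 1) * n + 1)
      ≤ T * ∑ i, Real.log (1 + (x i / x j - 1)) := by
        rw [hsum]
        gcongr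
        exact log_one_add_sum_le_sum_log_one_add _ fun i _ =>
          sub_nonneg.2 ((one_le_div hxj).2 (hj i))
    _ = ∑ i, (x i - x j) := by simp only [add_sub_cancel, Finset.mul_sum, hlog]
    _ = 1 - 1 / (1 / (n * x j)) := by simp [hx.2]

lemma uniform_unique_iff_forall_spikeTemp_lt (hn : 2 ≤ n) (hT : 0 < T) :
    (∀ x ∈ stdSimplex ℝ (Fin n), (uT n T x = x ↔ x = fun _ => (1 : ℝ) / n)) ↔
      ∀ t ∈ spikeTemp n '' Ioi 1, t < T := by
  constructor
  · rintro hunique _ ⟨β, hβ, rfl⟩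
    by_contra! hle
    obtain ⟨α, hα, rfl⟩ := Ioc_subset_image_spikeTemp (by positivity) hβ ⟨hT, hle⟩
    have : Nontrivial (Fin n) := Fin.nontrivial_iff_two_le.2 hn
    obtain ⟨i, i₀, hi⟩ := exists_pair_ne (Fin n)
    exact spike_ne_uniform hα hi <|
      (hunique _ (spike_mem_stdSimplex hα.le i₀)).1 (uT_spike hα i₀)
  · intro hlt x hx
    refine ⟨fun hfix => ?_, ?_⟩
    · by_contra hne
      obtain ⟨α, hα, hle⟩ := exists_le_spikeTemp_of_uT_eq_self hT hx hfix hne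
      exact (hlt _ (mem_image_of_mem _ hα)).not_ge hle
    · rintro rfl
      exact uT_uniform n T

end FixedPoints

/-- For the complete graph on `n` nodes: if `n > 2`, the map `u_T` has the uniform
vector as its unique fixed point iff `T > T*(n)`; if `n = 2`, this holds iff
`T ≥ T*(2) = 1/2`. -/
theorem complete_graph_critical_temperature
    (n : ℕ) (hn : 2 ≤ n) (T : ℝ) (hT : 0 < T) :
    (2 < n →
      ((∀ x ∈ stdSimplex ℝ (Fin n), (uT n T x = x ↔ x = fun _ => (1 : ℝ) / n)) ↔
        Tstar n < T)) ∧
    (n = 2 →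
      ((∀ x ∈ stdSimplex ℝ (Fin n), (uT n T x = x ↔ x = fun _ => (1 : ℝ) / n)) ↔
        Tstar n ≤ T)) ∧
    (n = 2 → Tstar n = 1/2) := by
  refine ⟨fun hn2 => ?_, ?_, ?_⟩
  · obtain ⟨t, ht⟩ := exists_isGreatest_image_spikeTemp (c := n) (by exact_mod_cast hn2)
    rw [uniform_unique_iff_forall_spikeTemp_lt hn hT, Tstar_eq_sSup_image, ht.csSup_eq, ht.lt_iff]
  · rintro rfl
    rw [uniform_unique_iff_forall_spikeTemp_lt hn hT, Tstar_two]
    refine ⟨fun hlt => ?_, fun hle => ?_⟩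
    · exact (isLUB_image_spikeTemp two_pos le_rfl).2 fun t ht => (hlt t ht).le
    · rintro _ ⟨α, hα, rfl⟩
      exact (spikeTemp_lt_one_div two_pos le_rfl hα).trans_le hle
  · rintro rfl
    exact Tstar_two
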